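/- Let ψ be the Mexican hat wavelet ψ(t)=(1−t²)e^{−t²/2}, so that ψ̂(u)=√(2π) u² e^{−u²/2}, and define c_s by c_s=√(2π)(−1)^{l−1}/(2^{l−1}(l−1)!) if s=2l with l≥1, and c_s=0 otherwise. Fix b∈ℝ, b≠0, let f∈L¹(ℝ)∩L²(ℝ), and set h(u)=e^{ibu} f̂(u). Assume h(u)=O(|u|^ρ) as u→0 for some ρ>−1, and that there exist β>0 and complex coefficients b_r^± such that for every N∈ℕ, h(u)−e^{ibu}Σ_{r=0}^{N−1} b_r^+ u^{−r−β}=O(u^{−N−β}) and h(−u)−e^{−ibu}Σ_{r=0}^{N−1} b_r^− u^{−r−β}=O(u^{−N−β}) as u→+∞. Then for every n≥1 the generalized Mellin transforms M[h₊;s+1] and M[h₋;s+1] exist for s=0,…,n−1 (where h₊(u)=h(u), h₋(u)=h(−u) for u>0), the limits defining δ_n(a) below exist, and for every a>0: (W_ψf)(b,a) = (1/2π)·{ Σ_{s=0}^{n−1} c_s ( M[h₊;s+1] + (−1)^s M[h₋;s+1] ) a^{s+1/2} + δ_n(a) }, where δ_n(a) = a^{−1/2} lim_{ε→0+} [ ∫_0^∞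 ψ̂_n(u) h(u/a) e^{−εu} du + ∫_0^∞ ψ̂_n(−u) h(−u/a) e^{−εu} du ] and ψ̂_n(u) := ψ̂(u) − Σ_{s=0}^{n−1} c_s u^s. -/

import Mathlib

open MeasureTheory Filter Set Topology Asymptotics

/-- The Fourier transform `f̂(ω) = ∫ e^{−itω} f(t) dt`. -/
noncomputable def fourierInt (f : ℝ → ℂ) (ω : ℝ) : ℂ :=
  ∫ t : ℝ, Complex.exp (-(Complex.I * t * ω)) * f t

/-- The wavelet transform `(W_ψ f)(b, a) = a^{−1/2} ∫ f(t) conj(ψ((t−b)/a)) dt`. -/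
noncomputable def waveletTransform (ψ f : ℝ → ℂ) (b a : ℝ) : ℂ :=
  (((Real.sqrt a)⁻¹ : ℝ) : ℂ) * ∫ t : ℝ, f t * (starRingEnd ℂ) (ψ ((t - b) / a))

/-- The Mexican hat wavelet `ψ(t) = (1 − t²) e^{−t²/2}`. -/
noncomputable def mexicanHat : ℝ → ℂ :=
  fun t => (((1 - t ^ 2) * Real.exp (-t ^ 2 / 2) : ℝ) : ℂ)

/-- Its Fourier transform `ψ̂(u) = √(2π) u² e^{−u²/2}`. -/
noncomputable def mexicanHatHat (u : ℝ) : ℂ :=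
  ((Real.sqrt (2 * Real.pi) * u ^ 2 * Real.exp (-u ^ 2 / 2) : ℝ) : ℂ)

/-- The Maclaurin coefficients: `c_s = √(2π)(−1)^{l−1}/(2^{l−1}(l−1)!)` if `s = 2l`,
`l ≥ 1`, and `c_s = 0` otherwise. -/
noncomputable def mexicanHatCoeff (s : ℕ) : ℂ :=
  if s % 2 = 0 ∧ 2 ≤ s then
    ((Real.sqrt (2 * Real.pi) * (-1 : ℝ) ^ (s / 2 - 1) /
      (2 ^ (s / 2 - 1) * ((s / 2 - 1).factorial : ℝ)) : ℝ) : ℂ)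
  else 0

/-- The remainder `ψ̂_n(u) = ψ̂(u) − Σ_{s=0}^{n−1} c_s u^s`. -/
noncomputable def mexicanHatHatRem (n : ℕ) (u : ℝ) : ℂ :=
  mexicanHatHat u - ∑ s ∈ Finset.range n, mexicanHatCoeff s * (u : ℂ) ^ s

/-!
Parseval's formula gives `(W_ψ f)(b, a) = (2π)⁻¹ a^{−1/2} ∫ conj ψ̂(u) h(u/a) du`. Splitting the
line at `0` and `conj ψ̂` into `Σ_{s<n} c_s u^s` and a remainder, the substitution `u ↦ a u` turns
the power terms into `c_s a^{s+1} (M[h₊; s+1] + (−1)^s M[h₋; s+1])`. These integrals diverge, but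
they exist in the sense of Abel: up to an absolutely integrable error, `u^s h(±u)` is a finite
combination of functions `e^{±ibu} u^γ`, which oscillate since `b ≠ 0`. The Abel integral of the
remainder then exists by subtraction.
-/

open scoped FourierTransform ComplexConjugate

/-! ### Abel-regularized integrals -/

/-- `HasAbelIntegral g μ M` says that the Abel-regularized integrals `∫ g(u) e^{-εu} dμ(u)`
converge absolutely for every `ε > 0` and tend to `M` as `ε → 0+`. For `g(u) = u^{z-1} h(u)` and
`μ` the Lebesgue measure on `(0, ∞)`, the limit is the generalized Mellin transform `M[h; z]`. -/
structure HasAbelIntegral (g : ℝ → ℂ) (μ : Measure ℝ) (M : ℂ) : Prop where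
  integrable_mul_exp : ∀ ε : ℝ, 0 < ε → Integrable (fun u => g u * (Real.exp (-ε * u) : ℂ)) μ
  tendsto : Tendsto (fun ε : ℝ => ∫ u, g u * (Real.exp (-ε * u) : ℂ) ∂μ) (𝓝[>] 0) (𝓝 M)

namespace HasAbelIntegral

variable {g g₁ g₂ : ℝ → ℂ} {μ ν : Measure ℝ} {M M₁ M₂ : ℂ}

lemma add (h₁ : HasAbelIntegral g₁ μ M₁) (h₂ : HasAbelIntegral g₂ μ M₂) :
    HasAbelIntegral (fun u => g₁ u + g₂ u) μ (M₁ + M₂) where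
  integrable_mul_exp ε hε := by
    simpa only [add_mul] using
      (h₁.integrable_mul_exp ε hε).fun_add (h₂.integrable_mul_exp ε hε)
  tendsto := by
    refine (h₁.tendsto.add h₂.tendsto).congr' ?_
    filter_upwards [self_mem_nhdsWithin] with ε hε
    rw [← integral_add (h₁.integrable_mul_exp ε hε) (h₂.integrable_mul_exp ε hε)]
    simp only [add_mul]

lemma const_mul (c : ℂ) (h : HasAbelIntegral g μ M) :
    HasAbelIntegral (fun u => c * g u) μ (c * M) where
  integrable_mul_exp ε hε := by
    simpa only [mul_assoc] using (h.integrable_mul_exp ε hε).const_mul c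
  tendsto := by
    simpa only [mul_assoc, integral_const_mul] using h.tendsto.const_mul c

lemma sub (h₁ : HasAbelIntegral g₁ μ M₁) (h₂ : HasAbelIntegral g₂ μ M₂) :
    HasAbelIntegral (fun u => g₁ u - g₂ u) μ (M₁ - M₂) := by
  simpa only [neg_one_mul, ← sub_eq_add_neg] using h₁.add (h₂.const_mul (-1))

lemma finsetSum {ι : Type*} {T : Finset ι} {g : ι → ℝ → ℂ} {M : ι → ℂ}
    (h : ∀ i ∈ T, HasAbelIntegral (g i) μ (M i)) :
    HasAbelIntegral (fun u => ∑ i ∈ T, g i u) μ (∑ i ∈ T, M i) where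
  integrable_mul_exp ε hε := by
    simpa only [Finset.sum_mul] using
      integrable_finsetSum T fun i hi => (h i hi).integrable_mul_exp ε hε
  tendsto := by
    refine (tendsto_finsetSum T fun i hi => (h i hi).tendsto).congr' ?_
    filter_upwards [self_mem_nhdsWithin] with ε hε
    rw [← integral_finsetSum T fun i hi => (h i hi).integrable_mul_exp ε hε]
    simp only [Finset.sum_mul]

lemma congr_ae (h : HasAbelIntegral g₁ μ M) (he : g₁ =ᵐ[μ] g₂) : HasAbelIntegral g₂ μ M := by
  have hmul (ε : ℝ) : (fun u => g₁ u * (Real.exp (-ε * u) : ℂ)) =ᵐ[μ]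
      fun u => g₂ u * (Real.exp (-ε * u) : ℂ) := he.mul EventuallyEq.rfl
  exact ⟨fun ε hε => (h.integrable_mul_exp ε hε).congr (hmul ε),
    h.tendsto.congr fun ε => integral_congr_ae (hmul ε)⟩

lemma add_measure (h₁ : HasAbelIntegral g μ M₁) (h₂ : HasAbelIntegral g ν M₂) :
    HasAbelIntegral g (μ + ν) (M₁ + M₂) where
  integrable_mul_exp ε hε :=
    (h₁.integrable_mul_exp ε hε).add_measure (h₂.integrable_mul_exp ε hε)
  tendsto := by
    refine (h₁.tendsto.add h₂.tendsto).congr' ?_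
    filter_upwards [self_mem_nhdsWithin] with ε hε
    rw [integral_add_measure (h₁.integrable_mul_exp ε hε) (h₂.integrable_mul_exp ε hε)]

lemma of_integrable (hμ : ∀ᵐ u ∂μ, 0 ≤ u) (hg : Integrable g μ) :
    HasAbelIntegral g μ (∫ u, g u ∂μ) := by
  have hexp {ε : ℝ} (hε : 0 < ε) : ∀ᵐ u ∂μ, ‖(Real.exp (-ε * u) : ℂ)‖ ≤ 1 := by
    filter_upwards [hμ] with u hu
    rw [Complex.norm_real, Real.norm_of_nonneg (Real.exp_pos _).le, Real.exp_le_one_iff, neg_mul]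
    exact neg_nonpos.mpr (mul_nonneg hε.le hu)
  have hint (ε : ℝ) (hε : 0 < ε) : Integrable (fun u => g u * (Real.exp (-ε * u) : ℂ)) μ :=
    hg.mul_bdd (Continuous.aestronglyMeasurable (by fun_prop)) (hexp hε)
  refine ⟨hint, tendsto_integral_filter_of_dominated_convergence (‖g ·‖) ?_ ?_ hg.norm ?_⟩
  · filter_upwards [self_mem_nhdsWithin] with ε hε using (hint ε hε).aestronglyMeasurable
  · filter_upwards [self_mem_nhdsWithin] with ε hε
    filter_upwards [hexp hε] with u hu
    simpa only [norm_mul] using mul_le_of_le_one_right (norm_nonneg _) hu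
  · refine Eventually.of_forall fun u => Tendsto.mono_left ?_ nhdsWithin_le_nhds
    have hcont : Continuous fun ε : ℝ => g u * (Real.exp (-ε * u) : ℂ) := by fun_prop
    simpa using hcont.tendsto 0

lemma comp_div (h : HasAbelIntegral g (volume.restrict (Ioi 0)) M) {a : ℝ} (ha : 0 < a) :
    HasAbelIntegral (fun u => g (u / a)) (volume.restrict (Ioi 0)) (a * M) := by
  let damped (ε v : ℝ) : ℂ := g v * (Real.exp (-ε * v) : ℂ)
  have hscale (ε : ℝ) :
      (fun u => g (u / a) * (Real.exp (-ε * u) : ℂ)) = fun u => damped (ε * a) (a⁻¹ * u) := by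
    ext u
    have hexp : -(ε * a) * (a⁻¹ * u) = -ε * u := by field_simp
    simp only [damped, hexp, div_eq_inv_mul]
  constructor
  · intro ε hε
    rw [hscale]
    refine (integrableOn_Ioi_comp_mul_left_iff (damped (ε * a)) 0 (inv_pos.mpr ha)).mpr ?_
    rw [mul_zero]
    exact h.integrable_mul_exp (ε * a) (mul_pos hε ha)
  · have hεa : Tendsto (fun ε : ℝ => ε * a) (𝓝[>] 0) (𝓝[>] 0) := by
      refine tendsto_nhdsWithin_iff.mpr ⟨?_, ?_⟩
      · exact Tendsto.mono_left (by simpa using (continuous_mul_const a).tendsto 0)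
          nhdsWithin_le_nhds
      · filter_upwards [self_mem_nhdsWithin] with ε hε using mul_pos hε ha
    refine ((h.tendsto.comp hεa).const_mul (a : ℂ)).congr fun ε => ?_
    rw [hscale, integral_comp_mul_left_Ioi (damped (ε * a)) 0 (inv_pos.mpr ha), inv_inv, mul_zero,
      Complex.real_smul, Function.comp_apply]

end HasAbelIntegral

/-! ### Oscillating powers -/

section OscillatingPowers

variable {z : ℂ} {c : ℝ} (γ : ℝ)

lemma integrableOn_cexp_mul_rpow (hz : z.re < 0) (hc : 0 < c) :
    IntegrableOn (fun u : ℝ => Complex.exp (z * u) * ((u ^ γ : ℝ) : ℂ)) (Ioi c) := by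
  have hcont : ContinuousOn (fun u : ℝ => Complex.exp (z * u) * ((u ^ γ : ℝ) : ℂ)) (Ici c) := by
    have hrpow : ContinuousOn (fun u : ℝ => u ^ γ) (Ici c) :=
      continuousOn_id.rpow_const fun u hu => Or.inl (hc.trans_le hu).ne'
    exact ContinuousOn.mul (by fun_prop) (Complex.continuous_ofReal.comp_continuousOn hrpow)
  have hO : (fun u : ℝ => Complex.exp (z * u) * ((u ^ γ : ℝ) : ℂ)) =O[atTop]
      fun u => Real.exp (-(-z.re / 2) * u) := by
    have hrpow : (fun u : ℝ => u ^ γ) =O[atTop] fun u => Real.exp (-z.re / 2 * u) :=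
      (isLittleO_rpow_exp_pos_mul_atTop γ (by linarith)).isBigO
    have hexp : (fun u : ℝ => Complex.exp (z * u)) =O[atTop] fun u => Real.exp (z.re * u) :=
      IsBigO.of_norm_eventuallyLE (.of_forall fun u => by simp [Complex.norm_exp])
    refine (hexp.mul (Complex.isBigO_ofReal_left.mpr hrpow)).congr_right fun u => ?_
    rw [← Real.exp_add]
    congr 1
    ring
  exact ((hcont.locallyIntegrableOn measurableSet_Ici).integrableOn_of_isBigO_atTop hO
    ⟨Ioi c, Ioi_mem_atTop c, exp_neg_integrableOn_Ioi c (by linarith)⟩).mono_set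
      Ioi_subset_Ici_self

lemma mul_integral_cexp_mul_rpow (hz : z.re < 0) (hc : 0 < c) :
    z * ∫ u in Ioi c, Complex.exp (z * u) * ((u ^ γ : ℝ) : ℂ) =
      -(Complex.exp (z * c) * ((c ^ γ : ℝ) : ℂ)) -
        γ * ∫ u in Ioi c, Complex.exp (z * u) * ((u ^ (γ - 1) : ℝ) : ℂ) := by
  have hderiv (x : ℝ) (hx : x ∈ Ici c) :
      HasDerivAt (fun u : ℝ => Complex.exp (z * u) * ((u ^ γ : ℝ) : ℂ))
        (z * (Complex.exp (z * x) * ((x ^ γ : ℝ) : ℂ)) +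
          γ * (Complex.exp (z * x) * ((x ^ (γ - 1) : ℝ) : ℂ))) x := by
    have hexp : HasDerivAt (fun u : ℝ => Complex.exp (z * u)) (Complex.exp (z * x) * z) x := by
      simpa using ((hasDerivAt_id x).ofReal_comp.const_mul z).cexp
    have hrpow : HasDerivAt (fun u : ℝ => ((u ^ γ : ℝ) : ℂ)) ((γ * x ^ (γ - 1) : ℝ) : ℂ) x :=
      (Real.hasDerivAt_rpow_const (Or.inl (hc.trans_le hx).ne')).ofReal_comp
    refine (hexp.fun_mul hrpow).congr_deriv ?_
    push_cast
    ring
  have hint := integrableOn_cexp_mul_rpow γ hz hc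
  have hint₁ := hint.const_mul z
  have hint₂ := (integrableOn_cexp_mul_rpow (γ - 1) hz hc).const_mul (γ : ℂ)
  have hlim := tendsto_zero_of_hasDerivAt_of_integrableOn_Ioi
    (fun x hx => hderiv x (Ioi_subset_Ici_self hx)) (hint₁.add hint₂) hint
  have hftc := integral_Ioi_of_hasDerivAt_of_tendsto' hderiv (hint₁.add hint₂) hlim
  rw [integral_add hint₁ hint₂, integral_const_mul, integral_const_mul, zero_sub] at hftc
  exact eq_sub_of_add_eq hftc

/- Each integration by parts lowers `γ` by one, at the price of dividing by `I * b - ε`, which stays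
away from `0` as `ε → 0+` because `b ≠ 0`. -/
lemma exists_hasAbelIntegral_cexp_mul_rpow {b : ℝ} (hb : b ≠ 0) (hc : 0 < c) :
    ∃ M, HasAbelIntegral (fun u : ℝ => Complex.exp (Complex.I * b * u) * ((u ^ γ : ℝ) : ℂ))
      (volume.restrict (Ioi c)) M := by
  obtain ⟨k, hk⟩ := exists_nat_gt (γ + 1)
  induction k generalizing γ with
  | zero =>
    refine ⟨_, HasAbelIntegral.of_integrable ?_ ?_⟩
    · filter_upwards [ae_restrict_mem measurableSet_Ioi] with u hu using (hc.trans hu).le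
    · have hγ : γ < -1 := by rw [Nat.cast_zero] at hk; linarith
      exact (integrableOn_Ioi_rpow_of_lt hγ hc).ofReal.bdd_mul (c := 1)
        (Continuous.aestronglyMeasurable (by fun_prop))
        (.of_forall fun u => by simp [Complex.norm_exp])
  | succ k ih =>
    obtain ⟨M, hM⟩ := ih (γ - 1) (by push_cast at hk; linarith)
    have hdamp (γ ε u : ℝ) : Complex.exp (Complex.I * b * u) * ((u ^ γ : ℝ) : ℂ) *
        (Real.exp (-ε * u) : ℂ) = Complex.exp ((Complex.I * b - ε) * u) * ((u ^ γ : ℝ) : ℂ) := by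
      rw [Complex.ofReal_exp, mul_right_comm, ← Complex.exp_add]
      congr 2
      push_cast
      ring
    have hre {ε : ℝ} (hε : 0 < ε) : (Complex.I * b - ε).re < 0 := by simpa using hε
    have hlim := hM.tendsto
    simp only [hdamp] at hlim
    have hfactor : Tendsto (fun ε : ℝ => Complex.I * b - ε) (𝓝[>] 0) (𝓝 (Complex.I * b)) := by
      have hcont : Continuous fun ε : ℝ => Complex.I * b - ε := by fun_prop
      simpa using (hcont.tendsto 0).mono_left nhdsWithin_le_nhds
    have hboundary := ((hfactor.mul_const (c : ℂ)).cexp.mul_const ((c ^ γ : ℝ) : ℂ)).neg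
    refine ⟨_, fun ε hε => ?_, ((hboundary.sub (hlim.const_mul (γ : ℂ))).div hfactor ?_).congr' ?_⟩
    · simp only [hdamp]
      exact integrableOn_cexp_mul_rpow γ (hre hε) hc
    · simpa using hb
    · filter_upwards [self_mem_nhdsWithin] with ε hε
      have hne : Complex.I * b - ε ≠ 0 := fun h0 => (hre hε).ne (by rw [h0, Complex.zero_re])
      simp only [hdamp, Pi.div_apply]
      rw [← mul_integral_cexp_mul_rpow γ (hre hε) hc, mul_div_cancel_left₀ _ hne]

end OscillatingPowers

lemma exists_hasAbelIntegral_of_sub_isBigO {g : ℝ → ℂ} (hg : LocallyIntegrableOn g (Ici 0))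
    {b : ℝ} (hb : b ≠ 0) {ι : Type*} (T : Finset ι) (c : ι → ℂ) (γ : ι → ℝ) {δ : ℝ} (hδ : δ < -1)
    (hO : (fun u => g u - Complex.exp (Complex.I * b * u) * ∑ i ∈ T, c i * ((u ^ γ i : ℝ) : ℂ))
      =O[atTop] fun u => u ^ δ) :
    ∃ M, HasAbelIntegral g (volume.restrict (Ioi 0)) M := by
  set osc : ℝ → ℂ := fun u => ∑ i ∈ T, c i * (Complex.exp (Complex.I * b * u) *
    ((u ^ γ i : ℝ) : ℂ)) with hosc
  have hrpow (i : ι) : ContinuousOn (fun u : ℝ => ((u ^ γ i : ℝ) : ℂ)) (Ici 1) :=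
    Complex.continuous_ofReal.comp_continuousOn <| continuousOn_id.rpow_const fun u hu =>
      Or.inl (zero_lt_one.trans_le hu).ne'
  have hosc_cont : ContinuousOn osc (Ici 1) :=
    continuousOn_finsetSum _ fun i _ =>
      continuousOn_const.mul (ContinuousOn.mul (by fun_prop) (hrpow i))
  have hrem : IntegrableOn (fun u => g u - osc u) (Ioi 1) := by
    refine (LocallyIntegrableOn.integrableOn_of_isBigO_atTop (g := fun u : ℝ => u ^ δ)
      ?_ ?_ (integrableAtFilter_rpow_atTop_iff.mpr hδ)).mono_set Ioi_subset_Ici_self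
    · exact (hg.mono_set (Ici_subset_Ici.mpr zero_le_one)).sub
        (hosc_cont.locallyIntegrableOn measurableSet_Ici)
    · simpa only [hosc, Finset.mul_sum, mul_left_comm] using hO
  choose M hM using fun i => exists_hasAbelIntegral_cexp_mul_rpow (γ i) hb one_pos
  have h_near : HasAbelIntegral g (volume.restrict (Ioc 0 1)) (∫ u in Ioc 0 1, g u) := by
    refine .of_integrable ?_ ?_
    · filter_upwards [ae_restrict_mem measurableSet_Ioc] with u hu using hu.1.le
    · exact (hg.integrableOn_compact_subset Icc_subset_Ici_self isCompact_Icc).mono_set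
        Ioc_subset_Icc_self
  have h_rem := HasAbelIntegral.of_integrable (by
    filter_upwards [ae_restrict_mem measurableSet_Ioi] with u hu using (zero_lt_one.trans hu).le)
    hrem
  have h_osc : HasAbelIntegral osc (volume.restrict (Ioi 1)) (∑ i ∈ T, c i * M i) :=
    .finsetSum fun i _ => (hM i).const_mul (c i)
  have h_far := h_rem.add h_osc
  simp only [sub_add_cancel] at h_far
  rw [← Ioc_union_Ioi_eq_Ioi zero_le_one,
    Measure.restrict_union Ioc_disjoint_Ioi_same measurableSet_Ioi]
  exact ⟨_, h_near.add_measure h_far⟩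

lemma exists_hasAbelIntegral_pow_mul {g : ℝ → ℂ} (hg : LocallyIntegrableOn g (Ici 0))
    {b : ℝ} (hb : b ≠ 0) {β : ℝ} (hβ : 0 < β) (c : ℕ → ℂ) {n s : ℕ} (hs : s < n)
    (hO : (fun u : ℝ => g u - Complex.exp (Complex.I * b * u) *
        ∑ r ∈ Finset.range n, c r * ((u ^ (-(r : ℝ) - β) : ℝ) : ℂ))
      =O[atTop] fun u => u ^ (-(n : ℝ) - β)) :
    ∃ M, HasAbelIntegral (fun u => ((u ^ s : ℝ) : ℂ) * g u) (volume.restrict (Ioi 0)) M := by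
  have hδ : (s : ℝ) + (-n - β) < -1 := by
    have : (s : ℝ) + 1 ≤ n := by exact_mod_cast hs
    linarith
  refine exists_hasAbelIntegral_of_sub_isBigO
    (hg.continuousOn_mul (by fun_prop) isClosed_Ici.isLocallyClosed) hb (Finset.range n) c
    (fun r => s + (-r - β)) hδ ?_
  have hpow : (fun u : ℝ => ((u ^ s : ℝ) : ℂ)) =O[atTop] fun u : ℝ => u ^ s :=
    Complex.isBigO_ofReal_left.mpr (isBigO_refl _ _)
  refine (hpow.mul hO).congr' ?_ ?_ <;> filter_upwards [eventually_gt_atTop 0] with u hu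
  · simp only [Real.rpow_add hu, Real.rpow_natCast, mul_sub, Finset.mul_sum]
    congr 1
    refine Finset.sum_congr rfl fun r _ => ?_
    push_cast
    ring
  · rw [Real.rpow_add hu, Real.rpow_natCast]

lemma HasAbelIntegral.sub_sum_mul_comp_div {g w : ℝ → ℂ} {M : ℕ → ℂ} {n : ℕ} {a : ℝ} (ha : 0 < a)
    (hw : IntegrableOn (fun u => w u * g (u / a)) (Ioi 0))
    (hM : ∀ s < n, HasAbelIntegral (fun u => ((u ^ s : ℝ) : ℂ) * g u)
      (volume.restrict (Ioi 0)) (M s)) (c : ℕ → ℂ) :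
    HasAbelIntegral (fun u => (w u - ∑ s ∈ Finset.range n, c s * (u : ℂ) ^ s) * g (u / a))
      (volume.restrict (Ioi 0))
      ((∫ u in Ioi 0, w u * g (u / a)) -
        ∑ s ∈ Finset.range n, c s * ((a : ℂ) ^ (s + 1) * M s)) := by
  have h_int := HasAbelIntegral.of_integrable
    (by filter_upwards [ae_restrict_mem measurableSet_Ioi] with u hu using le_of_lt hu) hw
  have h_pow (s : ℕ) (hs : s ∈ Finset.range n) :
      HasAbelIntegral (fun u => c s * ((u : ℂ) ^ s * g (u / a))) (volume.restrict (Ioi 0))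
        (c s * ((a : ℂ) ^ (s + 1) * M s)) := by
    have ha' : (a : ℂ) ≠ 0 := by exact_mod_cast ha.ne'
    convert (((hM s (Finset.mem_range.mp hs)).comp_div ha).const_mul ((a : ℂ) ^ s)).const_mul (c s)
      using 1
    · ext u
      simp only [Complex.ofReal_pow, Complex.ofReal_div, div_pow]
      field_simp
    · ring
  refine (h_int.sub (.finsetSum h_pow)).congr_ae (.of_forall fun u => ?_)
  simp only [sub_mul, Finset.sum_mul, mul_assoc]

/-! ### The Fourier transform -/

section Fourier

variable {f f' g ψ : ℝ → ℂ}

lemma fourierInt_eq_fourierIntegral_probChar (f : ℝ → ℂ) : fourierInt f =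
    VectorFourier.fourierIntegral Real.probChar volume (LinearMap.mul ℝ ℝ) f := by
  ext ω
  rw [fourierInt, VectorFourier.fourierIntegral_probChar]
  congr! 3 with t
  simp only [LinearMap.mul_apply']
  push_cast
  congr 1
  ring

lemma fourierInt_eq_fourier (f : ℝ → ℂ) (ω : ℝ) :
    fourierInt f ω = 𝓕 f (ω / (2 * Real.pi)) := by
  rw [fourierInt, Real.fourier_real_eq_integral_exp_smul]
  congr! 3 with t
  push_cast
  have hpi : (Real.pi : ℂ) ≠ 0 := by exact_mod_cast Real.pi_ne_zero
  field_simp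

lemma norm_fourierInt_le (f : ℝ → ℂ) (ω : ℝ) : ‖fourierInt f ω‖ ≤ ∫ t, ‖f t‖ := by
  rw [fourierInt_eq_fourierIntegral_probChar]
  exact VectorFourier.norm_fourierIntegral_le_integral_norm _ _ _ _ _

lemma continuous_fourierInt (hf : Integrable f) : Continuous (fourierInt f) := by
  rw [fourierInt_eq_fourierIntegral_probChar]
  exact VectorFourier.fourierIntegral_continuous Real.continuous_probChar
    (by simpa using continuous_mul) hf

lemma integral_fourierInt_mul (hf : Integrable f) (hg : Integrable g) :
    ∫ u, fourierInt f u * g u = ∫ t, f t * fourierInt g t := by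
  have hflip : (LinearMap.mul ℝ ℝ).flip = LinearMap.mul ℝ ℝ := by
    ext
    simp
  have h := VectorFourier.integral_fourierIntegral_smul_eq_flip (L := LinearMap.mul ℝ ℝ)
    Real.continuous_probChar (by simpa using continuous_mul) hf hg
  simpa only [hflip, ← fourierInt_eq_fourierIntegral_probChar, smul_eq_mul] using h

lemma fourierInt_neg (f : ℝ → ℂ) (ω : ℝ) :
    fourierInt (fun t => -f t) ω = -fourierInt f ω := by
  simp only [fourierInt, mul_neg, integral_neg]

lemma fourierInt_of_hasDerivAt (hderiv : ∀ t, HasDerivAt f (f' t) t) (hf : Integrable f)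
    (hf' : Integrable f') (ω : ℝ) : fourierInt f' ω = Complex.I * ω * fourierInt f ω := by
  have hderiv_eq : deriv f = f' := funext fun t => (hderiv t).deriv
  rw [fourierInt_eq_fourier, fourierInt_eq_fourier, ← hderiv_eq,
    Real.fourier_deriv hf (fun t => (hderiv t).differentiableAt) (hderiv_eq ▸ hf')]
  have hpi : (Real.pi : ℂ) ≠ 0 := by exact_mod_cast Real.pi_ne_zero
  simp only [smul_eq_mul]
  push_cast
  field_simp

lemma integral_comp_mul_add {E : Type*} [NormedAddCommGroup E] [NormedSpace ℝ E] (F : ℝ → E)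
    (a b : ℝ) : ∫ t, F (a * t + b) = |a|⁻¹ • ∫ t, F t := by
  rw [Measure.integral_comp_mul_left (fun t => F (t + b)) a, integral_add_right_eq_self, abs_inv]

lemma fourierInt_comp_mul_add (f : ℝ → ℂ) {a : ℝ} (ha : a ≠ 0) (b ω : ℝ) :
    fourierInt (fun t => f (a * t + b)) ω =
      (|a|⁻¹ : ℝ) * (Complex.exp (Complex.I * b * (ω / a : ℝ)) * fourierInt f (ω / a)) := by
  have ha' : (a : ℂ) ≠ 0 := by exact_mod_cast ha
  rw [fourierInt, fourierInt, ← integral_const_mul, ← Complex.real_smul,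
    ← integral_comp_mul_add _ a b]
  congr! 2
  rw [← mul_assoc, ← Complex.exp_add]
  congr 2
  push_cast
  field_simp
  ring

lemma integral_exp_mul_fourierInt (hψ : Continuous ψ) (hψ₁ : Integrable ψ)
    (hψ₂ : Integrable (fourierInt ψ)) (t : ℝ) :
    ∫ u : ℝ, Complex.exp (Complex.I * u * t) * fourierInt ψ u = (2 * Real.pi : ℝ) * ψ t := by
  have hpi : 2 * Real.pi ≠ 0 := by positivity
  have hint : Integrable (𝓕 ψ) := by
    refine (hψ₂.comp_mul_left' hpi).congr (.of_forall fun v => ?_)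
    simp only [fourierInt_eq_fourier, mul_div_cancel_left₀ _ hpi]
  have hsubst := Measure.integral_comp_div
    (fun v : ℝ => Complex.exp ((-2 * Real.pi * v * -t : ℝ) * Complex.I) • 𝓕 ψ v) (2 * Real.pi)
  rw [abs_of_pos Real.two_pi_pos, Complex.real_smul, ← Real.fourier_real_eq_integral_exp_smul,
    ← Real.fourierInv_eq_fourier_neg, hψ.fourierInv_fourier_eq hψ₁ hint] at hsubst
  rw [← hsubst]
  congr! 2 with u
  rw [fourierInt_eq_fourier, smul_eq_mul]
  congr 2
  push_cast
  field_simp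

lemma fourierInt_conj_fourierInt (hψ : Continuous ψ) (hψ₁ : Integrable ψ)
    (hψ₂ : Integrable (fourierInt ψ)) (t : ℝ) :
    fourierInt (fun u => conj (fourierInt ψ u)) t = (2 * Real.pi : ℝ) * conj (ψ t) := by
  rw [← Complex.conj_ofReal, ← map_mul, ← integral_exp_mul_fourierInt hψ hψ₁ hψ₂, ← integral_conj,
    fourierInt]
  congr! 2
  simp [← Complex.exp_conj]

lemma waveletTransform_eq_integral (hψ : Continuous ψ) (hψ₁ : Integrable ψ)
    (hψ₂ : Integrable (fourierInt ψ)) (hf : Integrable f) (b : ℝ) {a : ℝ} (ha : 0 < a) :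
    waveletTransform ψ f b a = ((2 * Real.pi)⁻¹ : ℝ) * (((Real.sqrt a)⁻¹ : ℝ) *
      ∫ u : ℝ, conj (fourierInt ψ u) *
        (Complex.exp (Complex.I * b * (u / a : ℝ)) * fourierInt f (u / a))) := by
  have hf_affine : Integrable fun x => f (a * x + b) :=
    (hf.comp_add_right b).comp_mul_left' ha.ne'
  have hψ_conj : Integrable fun u => conj (fourierInt ψ u) :=
    (Complex.conjLIE.integrable_comp_iff (φ := fourierInt ψ)).mpr hψ₂
  have hsubst := integral_comp_mul_add (fun t => f t * conj (ψ ((t - b) / a))) a b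
  simp only [add_sub_cancel_right, mul_div_cancel_left₀ _ ha.ne', Complex.real_smul] at hsubst
  have ha_inv : ((|a|⁻¹ : ℝ) : ℂ) ≠ 0 := by exact_mod_cast inv_ne_zero (abs_ne_zero.mpr ha.ne')
  have hparseval : ∫ u : ℝ, conj (fourierInt ψ u) *
      (Complex.exp (Complex.I * b * (u / a : ℝ)) * fourierInt f (u / a)) =
        (2 * Real.pi : ℝ) * ∫ t, f t * conj (ψ ((t - b) / a)) := by
    refine mul_left_cancel₀ ha_inv ?_
    calc (|a|⁻¹ : ℝ) * ∫ u : ℝ, conj (fourierInt ψ u) *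
          (Complex.exp (Complex.I * b * (u / a : ℝ)) * fourierInt f (u / a))
        = ∫ u, fourierInt (fun x => f (a * x + b)) u * conj (fourierInt ψ u) := by
          simp only [← integral_const_mul, fourierInt_comp_mul_add f ha.ne', mul_comm, mul_assoc,
            mul_left_comm]
      _ = ∫ x, f (a * x + b) * ((2 * Real.pi : ℝ) * conj (ψ x)) := by
          simp only [integral_fourierInt_mul hf_affine hψ_conj,
            fourierInt_conj_fourierInt hψ hψ₁ hψ₂]
      _ = (|a|⁻¹ : ℝ) * ((2 * Real.pi : ℝ) * ∫ t, f t * conj (ψ ((t - b) / a))) := by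
          rw [mul_left_comm, ← hsubst, ← integral_const_mul]
          simp only [mul_left_comm]
  have hpi : (Real.pi : ℂ) ≠ 0 := by exact_mod_cast Real.pi_ne_zero
  rw [waveletTransform, hparseval]
  push_cast
  field_simp

end Fourier

/-! ### The Mexican hat -/

lemma integrable_pow_mul_exp_neg_sq_div_two (k : ℕ) :
    Integrable fun t : ℝ => t ^ k * Real.exp (-t ^ 2 / 2) := by
  have h := integrable_rpow_mul_exp_neg_mul_sq (b := 1 / 2) (by norm_num) (s := k)
    (by linarith [k.cast_nonneg (α := ℝ)])
  refine h.congr (.of_forall fun t => ?_)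
  simp only [Real.rpow_natCast]
  congr 2
  ring

lemma integrable_gaussian : Integrable fun t : ℝ => (Real.exp (-t ^ 2 / 2) : ℂ) := by
  simpa using (integrable_pow_mul_exp_neg_sq_div_two 0).ofReal (𝕜 := ℂ)

lemma integrable_mul_gaussian : Integrable fun t : ℝ => (t : ℂ) * (Real.exp (-t ^ 2 / 2) : ℂ) := by
  simpa using (integrable_pow_mul_exp_neg_sq_div_two 1).ofReal (𝕜 := ℂ)

lemma integrable_mexicanHat : Integrable mexicanHat := by
  refine ((integrable_pow_mul_exp_neg_sq_div_two 0).sub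
    (integrable_pow_mul_exp_neg_sq_div_two 2)).ofReal.congr (.of_forall fun t => ?_)
  simp [mexicanHat, sub_mul]

lemma continuous_mexicanHat : Continuous mexicanHat := by
  unfold mexicanHat
  fun_prop

lemma integrable_mexicanHatHat : Integrable mexicanHatHat := by
  refine ((integrable_pow_mul_exp_neg_sq_div_two 2).const_mul
    (Real.sqrt (2 * Real.pi))).ofReal.congr (.of_forall fun u => ?_)
  simp [mexicanHatHat, mul_assoc]

lemma hasDerivAt_gaussian (t : ℝ) : HasDerivAt (fun t : ℝ => (Real.exp (-t ^ 2 / 2) : ℂ))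
    (-((t : ℂ) * (Real.exp (-t ^ 2 / 2) : ℂ))) t := by
  have hsq : HasDerivAt (fun t : ℝ => -t ^ 2 / 2) (-t) t := by
    refine (((hasDerivAt_pow 2 t).fun_neg).div_const 2).congr_deriv ?_
    ring
  refine hsq.exp.ofReal_comp.congr_deriv ?_
  push_cast
  ring

lemma hasDerivAt_mul_gaussian (t : ℝ) :
    HasDerivAt (fun t : ℝ => (t : ℂ) * (Real.exp (-t ^ 2 / 2) : ℂ)) (mexicanHat t) t := by
  refine ((hasDerivAt_id t).ofReal_comp.fun_mul (hasDerivAt_gaussian t)).congr_deriv ?_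
  simp only [mexicanHat, id]
  push_cast
  ring

lemma fourierInt_gaussian (ω : ℝ) : fourierInt (fun t : ℝ => (Real.exp (-t ^ 2 / 2) : ℂ)) ω =
    ((Real.sqrt (2 * Real.pi) * Real.exp (-ω ^ 2 / 2) : ℝ) : ℂ) := by
  have hsqrt : ((Real.pi : ℂ) / (1 / 2)) ^ (1 / 2 : ℂ) = (Real.sqrt (2 * Real.pi) : ℂ) := by
    rw [Real.sqrt_eq_rpow, Complex.ofReal_cpow (by positivity)]
    push_cast
    congr 1
    ring
  calc fourierInt (fun t : ℝ => (Real.exp (-t ^ 2 / 2) : ℂ)) ω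
      = ∫ t : ℝ, Complex.exp (Complex.I * -(ω : ℂ) * t) * Complex.exp (-(1 / 2) * (t : ℂ) ^ 2) := by
        rw [fourierInt]
        congr! 2 with t
        push_cast
        congr 2 <;> ring
    _ = ((Real.pi : ℂ) / (1 / 2)) ^ (1 / 2 : ℂ) *
          Complex.exp (-(-(ω : ℂ)) ^ 2 / (4 * (1 / 2))) :=
        fourierIntegral_gaussian (by norm_num) _
    _ = ((Real.sqrt (2 * Real.pi) * Real.exp (-ω ^ 2 / 2) : ℝ) : ℂ) := by
        rw [hsqrt]
        push_cast
        congr 2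
        ring

-- `ψ = -g''` for the Gaussian `g`, so `ψ̂(ω) = -(iω)² ĝ(ω)`.
lemma fourierInt_mexicanHat (ω : ℝ) : fourierInt mexicanHat ω = mexicanHatHat ω := by
  have hg' := fourierInt_of_hasDerivAt hasDerivAt_gaussian integrable_gaussian
    integrable_mul_gaussian.fun_neg ω
  rw [fourierInt_neg, fourierInt_gaussian, neg_eq_iff_eq_neg] at hg'
  rw [fourierInt_of_hasDerivAt hasDerivAt_mul_gaussian integrable_mul_gaussian
    integrable_mexicanHat, hg', mexicanHatHat]
  push_cast
  linear_combination (-(ω : ℂ) ^ 2 * Real.sqrt (2 * Real.pi) * Complex.exp (-ω ^ 2 / 2)) *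
    Complex.I_sq

lemma integrable_fourierInt_mexicanHat : Integrable (fourierInt mexicanHat) := by
  simpa only [funext fourierInt_mexicanHat] using! integrable_mexicanHatHat

/-! ### The expansion of the wavelet transform -/

/-- The remainder `conj ψ̂(u) − Σ_{s<n} c_s u^s`, the analogue of `ψ̂_n` for a wavelet `ψ` whose
Fourier transform need not be real and for arbitrary coefficients `c_s`. -/
noncomputable def conjFourierRem (ψ : ℝ → ℂ) (c : ℕ → ℂ) (n : ℕ) (u : ℝ) : ℂ :=
  conj (fourierInt ψ u) - ∑ s ∈ Finset.range n, c s * (u : ℂ) ^ s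

lemma conjFourierRem_mexicanHat (n : ℕ) :
    conjFourierRem mexicanHat mexicanHatCoeff n = mexicanHatHatRem n := by
  ext u
  rw [conjFourierRem, mexicanHatHatRem, fourierInt_mexicanHat, mexicanHatHat, Complex.conj_ofReal]

section Expansion

variable {ψ f h : ℝ → ℂ} {b : ℝ}

lemma integral_eq_integral_Ioi_add_integral_Ioi_comp_neg {E : Type*} [NormedAddCommGroup E]
    [NormedSpace ℝ E] {F : ℝ → E} (hF : Integrable F) :
    ∫ u, F u = (∫ u in Ioi 0, F u) + ∫ u in Ioi 0, F (-u) := by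
  rw [integral_comp_neg_Ioi, neg_zero, add_comm,
    intervalIntegral.integral_Iic_add_Ioi hF.integrableOn hF.integrableOn]

lemma rpow_add_one_half (s : ℕ) {a : ℝ} (ha : 0 < a) :
    a ^ ((s : ℝ) + 1 / 2) = (Real.sqrt a)⁻¹ * a ^ (s + 1) := by
  rw [Real.rpow_add ha, Real.rpow_natCast, ← Real.sqrt_eq_rpow, pow_succ]
  field_simp
  rw [Real.sq_sqrt ha.le]

lemma integrable_conj_fourierInt_mul_comp_div (hf : Integrable f)
    (hdef : ∀ u : ℝ, h u = Complex.exp (Complex.I * b * u) * fourierInt f u)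
    (hψ : Integrable (fourierInt ψ)) (a : ℝ) :
    Integrable fun u => conj (fourierInt ψ u) * h (u / a) := by
  have hψ_conj : Integrable fun u => conj (fourierInt ψ u) :=
    (Complex.conjLIE.integrable_comp_iff (φ := fourierInt ψ)).mpr hψ
  have hf_cont := continuous_fourierInt hf
  simp only [hdef]
  refine hψ_conj.mul_bdd (c := ∫ t, ‖f t‖) (Continuous.aestronglyMeasurable (by fun_prop))
    (.of_forall fun u => ?_)
  simpa [Complex.norm_exp] using norm_fourierInt_le f (u / a)

lemma exists_waveletTransform_eq_sum_add (hψ : Continuous ψ) (hψ₁ : Integrable ψ)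
    (hψ₂ : Integrable (fourierInt ψ)) (hf : Integrable f)
    (hdef : ∀ u : ℝ, h u = Complex.exp (Complex.I * b * u) * fourierInt f u)
    (c : ℕ → ℂ) {n : ℕ} {Mp Mm : ℕ → ℂ}
    (hMp : ∀ s < n, HasAbelIntegral (fun u => ((u ^ s : ℝ) : ℂ) * h u)
      (volume.restrict (Ioi 0)) (Mp s))
    (hMm : ∀ s < n, HasAbelIntegral (fun u => ((u ^ s : ℝ) : ℂ) * h (-u))
      (volume.restrict (Ioi 0)) (Mm s)) {a : ℝ} (ha : 0 < a) :
    ∃ Lp Lm : ℂ,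
      HasAbelIntegral (fun u => conjFourierRem ψ c n u * h (u / a)) (volume.restrict (Ioi 0)) Lp ∧
      HasAbelIntegral (fun u => conjFourierRem ψ c n (-u) * h (-u / a))
        (volume.restrict (Ioi 0)) Lm ∧
      waveletTransform ψ f b a = ((2 * Real.pi)⁻¹ : ℝ) *
        ((∑ s ∈ Finset.range n, c s * (Mp s + (-1 : ℂ) ^ s * Mm s) *
            ((a ^ ((s : ℝ) + 1 / 2) : ℝ) : ℂ)) + ((Real.sqrt a)⁻¹ : ℝ) * (Lp + Lm)) := by
  have hF := integrable_conj_fourierInt_mul_comp_div hf hdef hψ₂ a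
  have hLp := HasAbelIntegral.sub_sum_mul_comp_div ha hF.integrableOn hMp c
  have hLm := HasAbelIntegral.sub_sum_mul_comp_div (g := fun u => h (-u))
    (w := fun u => conj (fourierInt ψ (-u))) ha
    (by simpa only [neg_div] using hF.comp_neg.integrableOn) hMm (fun s => c s * (-1) ^ s)
  have hneg (s : ℕ) (u : ℝ) : c s * (-1) ^ s * (u : ℂ) ^ s = c s * ((-u : ℝ) : ℂ) ^ s := by
    rw [mul_assoc, ← mul_pow, neg_one_mul, Complex.ofReal_neg]
  simp only [hneg, ← neg_div] at hLm
  refine ⟨_, _, hLp, hLm, ?_⟩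
  have hsum : ∑ s ∈ Finset.range n, c s * (Mp s + (-1 : ℂ) ^ s * Mm s) *
      ((a ^ ((s : ℝ) + 1 / 2) : ℝ) : ℂ) = ((Real.sqrt a)⁻¹ : ℝ) *
        (∑ s ∈ Finset.range n, c s * ((a : ℂ) ^ (s + 1) * Mp s) +
          ∑ s ∈ Finset.range n, c s * (-1) ^ s * ((a : ℂ) ^ (s + 1) * Mm s)) := by
    rw [← Finset.sum_add_distrib, Finset.mul_sum]
    refine Finset.sum_congr rfl fun s _ => ?_
    rw [rpow_add_one_half s ha]
    push_cast
    ring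
  simp only [waveletTransform_eq_integral hψ hψ₁ hψ₂ hf b ha, ← hdef,
    integral_eq_integral_Ioi_add_integral_Ioi_comp_neg hF, hsum]
  ring

theorem mexicanHat_wavelet_asymptotic_general (hb : b ≠ 0) (hψ : Continuous ψ) (hψ₁ : Integrable ψ)
    (hψ₂ : Integrable (fourierInt ψ)) (hf : Integrable f)
    (hdef : ∀ u : ℝ, h u = Complex.exp (Complex.I * b * u) * fourierInt f u)
    {β : ℝ} (hβ : 0 < β) (bp bm : ℕ → ℂ) (n : ℕ)
    (hhp : (fun u : ℝ => h u - Complex.exp (Complex.I * b * u) *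
          ∑ r ∈ Finset.range n, bp r * ((u ^ (-(r : ℝ) - β) : ℝ) : ℂ))
        =O[atTop] fun u => u ^ (-(n : ℝ) - β))
    (hhm : (fun u : ℝ => h (-u) - Complex.exp (-(Complex.I * b * u)) *
          ∑ r ∈ Finset.range n, bm r * ((u ^ (-(r : ℝ) - β) : ℝ) : ℂ))
        =O[atTop] fun u => u ^ (-(n : ℝ) - β)) (c : ℕ → ℂ) :
    ∃ Mp Mm : ℕ → ℂ,
      (∀ s < n, HasAbelIntegral (fun u => ((u ^ s : ℝ) : ℂ) * h u)
          (volume.restrict (Ioi 0)) (Mp s) ∧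
        HasAbelIntegral (fun u => ((u ^ s : ℝ) : ℂ) * h (-u)) (volume.restrict (Ioi 0)) (Mm s)) ∧
      ∀ a : ℝ, 0 < a → ∃ Lp Lm : ℂ,
        HasAbelIntegral (fun u => conjFourierRem ψ c n u * h (u / a)) (volume.restrict (Ioi 0)) Lp ∧
        HasAbelIntegral (fun u => conjFourierRem ψ c n (-u) * h (-u / a))
          (volume.restrict (Ioi 0)) Lm ∧
        waveletTransform ψ f b a = ((2 * Real.pi)⁻¹ : ℝ) *
          ((∑ s ∈ Finset.range n, c s * (Mp s + (-1 : ℂ) ^ s * Mm s) *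
              ((a ^ ((s : ℝ) + 1 / 2) : ℝ) : ℂ)) + ((Real.sqrt a)⁻¹ : ℝ) * (Lp + Lm)) := by
  have hf_cont := continuous_fourierInt hf
  have hh : Continuous h := by
    rw [funext hdef]
    fun_prop
  have hh_neg : Continuous fun u => h (-u) := by fun_prop
  choose! Mp hMp using fun s (hs : s < n) => exists_hasAbelIntegral_pow_mul
    (hh.locallyIntegrable.locallyIntegrableOn _) hb hβ bp hs hhp
  choose! Mm hMm using fun s (hs : s < n) => exists_hasAbelIntegral_pow_mul
    (hh_neg.locallyIntegrable.locallyIntegrableOn _) (neg_ne_zero.mpr hb) hβ bm hs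
    (by simpa only [Complex.ofReal_neg, mul_neg, neg_mul] using hhm)
  exact ⟨Mp, Mm, fun s hs => ⟨hMp s hs, hMm s hs⟩, fun a ha =>
    exists_waveletTransform_eq_sum_add hψ hψ₁ hψ₂ hf hdef c hMp hMm ha⟩

end Expansion

/-- **Asymptotic expansion of the Mexican hat wavelet transform for small `a`.**
With `ψ` the Mexican hat wavelet (so `ψ̂(u) = √(2π) u² e^{−u²/2}`), `b ≠ 0`,
`f ∈ L¹ ∩ L²`, `h(u) = e^{ibu} f̂(u)` with `h(u) = O(|u|^ρ)` (`ρ > −1`) as `u → 0`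
and the stated expansions as `u → ±∞`, then for every `n ≥ 1` the generalized Mellin
transforms `M[h₊; s+1]`, `M[h₋; s+1]` exist for `s < n`, the limit defining `δ_n(a)`
exists, and `(W_ψ f)(b,a) = (1/2π){Σ_{s<n} c_s (M[h₊;s+1] + (−1)^s M[h₋;s+1]) a^{s+1/2}
+ δ_n(a)}` where `δ_n(a) = a^{−1/2}·(limit)`. -/
theorem mexicanHat_wavelet_asymptotic (b : ℝ) (hb : b ≠ 0)
    (f : ℝ → ℂ) (hf1 : Integrable f) (hf2 : MemLp f 2 volume)
    (h : ℝ → ℂ) (hdef : ∀ u : ℝ, h u = Complex.exp (Complex.I * b * u) * fourierInt f u)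
    (ρ : ℝ) (hρ : -1 < ρ)
    (hh0 : h =O[𝓝[≠] (0 : ℝ)] fun u => |u| ^ ρ)
    (β : ℝ) (hβ : 0 < β) (bp bm : ℕ → ℂ)
    (hhp : ∀ N : ℕ,
      (fun u : ℝ => h u - Complex.exp (Complex.I * b * u) *
          ∑ r ∈ Finset.range N, bp r * ((u ^ (-(r : ℝ) - β) : ℝ) : ℂ))
        =O[atTop] fun u => u ^ (-(N : ℝ) - β))
    (hhm : ∀ N : ℕ,
      (fun u : ℝ => h (-u) - Complex.exp (-(Complex.I * b * u)) *
          ∑ r ∈ Finset.range N, bm r * ((u ^ (-(r : ℝ) - β) : ℝ) : ℂ))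
        =O[atTop] fun u => u ^ (-(N : ℝ) - β)) :
    (∀ u : ℝ, fourierInt mexicanHat u = mexicanHatHat u)
    ∧ ∀ n : ℕ, 1 ≤ n →
      ∃ Mp Mm : ℕ → ℂ,
        (∀ s : ℕ, s < n →
          Tendsto (fun ε : ℝ => ∫ u in Ioi (0 : ℝ),
              ((u ^ s : ℝ) : ℂ) * h u * ((Real.exp (-ε * u) : ℝ) : ℂ))
            (𝓝[>] 0) (𝓝 (Mp s))
          ∧ Tendsto (fun ε : ℝ => ∫ u in Ioi (0 : ℝ),
              ((u ^ s : ℝ) : ℂ) * h (-u) * ((Real.exp (-ε * u) : ℝ) : ℂ))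
            (𝓝[>] 0) (𝓝 (Mm s)))
        ∧ ∀ a : ℝ, 0 < a → ∃ L : ℂ,
            Tendsto (fun ε : ℝ =>
                (∫ u in Ioi (0 : ℝ),
                  mexicanHatHatRem n u * h (u / a) * ((Real.exp (-ε * u) : ℝ) : ℂ))
                + ∫ u in Ioi (0 : ℝ),
                  mexicanHatHatRem n (-u) * h (-u / a) * ((Real.exp (-ε * u) : ℝ) : ℂ))
              (𝓝[>] 0) (𝓝 L)
            ∧ waveletTransform mexicanHat f b a
              = (((2 * Real.pi)⁻¹ : ℝ) : ℂ) *
                ((∑ s ∈ Finset.range n, mexicanHatCoeff s * (Mp s + (-1 : ℂ) ^ s * Mm s) *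
                    ((a ^ ((s : ℝ) + 1 / 2) : ℝ) : ℂ))
                  + (((Real.sqrt a)⁻¹ : ℝ) : ℂ) * L) := by
  refine ⟨fourierInt_mexicanHat, fun n _ => ?_⟩
  obtain ⟨Mp, Mm, hM, hL⟩ := mexicanHat_wavelet_asymptotic_general hb continuous_mexicanHat
    integrable_mexicanHat integrable_fourierInt_mexicanHat hf1 hdef hβ bp bm n (hhp n) (hhm n)
    mexicanHatCoeff
  refine ⟨Mp, Mm, fun s hs => ⟨(hM s hs).1.tendsto, (hM s hs).2.tendsto⟩, fun a ha => ?_⟩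
  obtain ⟨Lp, Lm, hLp, hLm, hW⟩ := hL a ha
  rw [conjFourierRem_mexicanHat] at hLp hLm
  exact ⟨Lp + Lm, hLp.tendsto.add hLm.tendsto, hW⟩
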